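/- arXiv:2008.08644 — 4 statements merged into one kernel-verified Lean document; each statement's English description precedes it below -/
import Mathlib

section
/- Let 0 < γ < δ and s ∈ ℕ with s ≥ 1. Then |(1/3)·A(γ^s, δ^s) + (2/3)·A(γ,δ)^s − L_s(γ,δ)^s| ≤ (5(δ−γ)/72)·s·(γ^(s−1) + δ^(s−1)). -/
theorem simpson_chord (γ δ σ x : ℝ) (n : ℕ) (hγ : 0 < γ) (hγδ : γ < δ)
    (hσ : σ * (δ - γ) = δ^n - γ^n) (h1 : γ ≤ x) (h2 : x ≤ δ) :
    x^n ≤ γ^n + σ * (x - γ) := by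
  have hw : 0 < δ - γ := by linarith
  have ha : 0 ≤ (δ - x)/(δ-γ) := div_nonneg (by linarith) hw.le
  have hb : 0 ≤ (x - γ)/(δ-γ) := div_nonneg (by linarith) hw.le
  have h := (convexOn_pow (𝕜 := ℝ) n).2 (Set.mem_Ici.2 hγ.le) (Set.mem_Ici.2 (hγ.trans hγδ).le)
    ha hb (by field_simp; ring)
  simp only [smul_eq_mul] at h
  have e1 : (δ - x)/(δ-γ) * γ + (x-γ)/(δ-γ) * δ = x := by field_simp; ring
  have e2 : (δ - x)/(δ-γ) * γ^n + (x-γ)/(δ-γ) * δ^n = γ^n + σ * (x - γ) := by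
    have : δ^n = γ^n + σ * (δ - γ) := by linarith
    rw [this]; field_simp; ring
  rwa [e1, e2] at h

theorem simpson_H (c x : ℝ) (n : ℕ) :
    HasDerivAt (fun x : ℝ => (x - c) * x^(n+1) - x^(n+2)/((n:ℝ)+2))
      ((x - c) * (((n:ℝ)+1) * x^n)) x := by
  have hn : (n:ℝ) + 2 ≠ 0 := by positivity
  have h := (((hasDerivAt_id x).sub_const c).mul (hasDerivAt_pow (n+1) x)).sub
    ((hasDerivAt_pow (n+2) x).div_const ((n:ℝ)+2))
  refine h.congr_deriv ?_
  simp
  field_simp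
  ring

theorem simpson_K (c x a σ : ℝ) :
    HasDerivAt (fun x : ℝ => a * (x-c)^2/2 + σ * (x-c)^3/3)
      ((x - c) * (a + σ * (x - c))) x := by
  have h0 := (hasDerivAt_id x).sub_const c
  have h := (((h0.pow 2).const_mul a).div_const 2).add (((h0.pow 3).const_mul σ).div_const 3)
  refine h.congr_deriv ?_
  simp
  ring

theorem mono_aux (F G : ℝ → ℝ) (γ δ c : ℝ)
    (hF : ∀ x, HasDerivAt F ((x - c) * G x) x) (hG : ∀ x, γ ≤ x → x ≤ δ → 0 ≤ G x)
    (x : ℝ) (h1 : γ ≤ x) (h2 : x ≤ δ) (hc1 : γ ≤ c) (hc2 : c ≤ δ) : F c ≤ F x := by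
  have hcont : Continuous F := continuous_iff_continuousAt.2 fun x => (hF x).continuousAt
  rcases le_total c x with h | h
  · refine monotoneOn_of_deriv_nonneg (convex_Icc c x) hcont.continuousOn
      (fun y _ => (hF y).differentiableAt.differentiableWithinAt) ?_ ⟨le_rfl, h⟩ ⟨h, le_rfl⟩ h
    intro y hy
    rw [interior_Icc] at hy
    rw [(hF y).deriv]
    exact mul_nonneg (by linarith [hy.1]) (hG y (by linarith [hy.1]) (by linarith [hy.2]))
  · refine antitoneOn_of_deriv_nonpos (convex_Icc x c) hcont.continuousOn
      (fun y _ => (hF y).differentiableAt.differentiableWithinAt) ?_ ⟨le_rfl, h⟩ ⟨h, le_rfl⟩ h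
    intro y hy
    rw [interior_Icc] at hy
    rw [(hF y).deriv]
    exact mul_nonpos_of_nonpos_of_nonneg (by linarith [hy.2])
      (hG y (by linarith [hy.1]) (by linarith [hy.2]))

theorem simpson_piece (γ δ σ c x : ℝ) (n : ℕ) (hγ : 0 < γ) (hγδ : γ < δ)
    (hσ : σ * (δ - γ) = δ^n - γ^n) (h1 : γ ≤ x) (h2 : x ≤ δ) (hc1 : γ ≤ c) (hc2 : c ≤ δ) :
    0 ≤ ((x - c) * x^(n+1) - x^(n+2)/((n:ℝ)+2)) + c^(n+2)/((n:ℝ)+2) ∧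
    ((x - c) * x^(n+1) - x^(n+2)/((n:ℝ)+2)) + c^(n+2)/((n:ℝ)+2) ≤
      ((n:ℝ)+1) * ((γ^n + σ * (c-γ)) * (x-c)^2/2 + σ * (x-c)^3/3) := by
  constructor
  · have := mono_aux _ _ γ δ c (fun x => simpson_H c x n)
      (fun y hy _ => by have : 0 < y := by linarith
                        positivity) x h1 h2 hc1 hc2
    simp at this
    linarith
  · have := mono_aux _ (fun y => ((n:ℝ)+1) * (((γ^n + σ * (c-γ)) + σ * (y - c)) - y^n)) γ δ c
      (fun y => (((simpson_K c y (γ^n + σ * (c-γ)) σ).const_mul ((n:ℝ)+1)).sub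
        (simpson_H c y n)).congr_deriv (by ring))
      (fun y hy hy' => by
        have := simpson_chord γ δ σ y n hγ hγδ hσ hy hy'
        refine mul_nonneg (by positivity) (by linarith)) x h1 h2 hc1 hc2
    simp at this
    linarith

theorem means_simpson_pow (γ δ : ℝ) (s : ℕ)
    (hγ : 0 < γ) (hγδ : γ < δ) (hs : 1 ≤ s) :
    |(1/3) * ((γ^s + δ^s)/2) + (2/3) * ((γ+δ)/2)^s
      - (δ^(s+1) - γ^(s+1)) / (((s:ℝ)+1) * (δ-γ))|
    ≤ (5 * (δ-γ) / 72) * s * (γ^(s-1) + δ^(s-1)) := by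
  obtain ⟨n, rfl⟩ : ∃ n, s = n + 1 := ⟨s - 1, by omega⟩
  obtain ⟨w, hw, rfl⟩ : ∃ w, 0 < w ∧ δ = γ + w := ⟨δ - γ, by linarith, by ring⟩
  obtain ⟨σ, hσ⟩ : ∃ σ, σ * (γ + w - γ) = (γ+w)^n - γ^n :=
    ⟨((γ+w)^n - γ^n)/w, by field_simp; ring⟩
  have P := fun c x => simpson_piece γ (γ+w) σ c x n hγ hγδ hσ
  have p1 := P (γ+w/6) γ (by linarith) (by linarith) (by linarith) (by linarith)
  have p2 := P (γ+w/6) (γ+w/2) (by linarith) (by linarith) (by linarith) (by linarith)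
  have p3 := P (γ+5*w/6) (γ+w/2) (by linarith) (by linarith) (by linarith) (by linarith)
  have p4 := P (γ+5*w/6) (γ+w) (by linarith) (by linarith) (by linarith) (by linarith)
  clear P
  have hB : (γ+w)^n = γ^n + σ * w := by linarith
  have hm : (γ + (γ + w))/2 = γ + w/2 := by ring
  have hn : (n:ℝ) + 2 ≠ 0 := by positivity
  rw [hm, Nat.add_sub_cancel, hB]
  have hE : (1/3) * ((γ^(n+1) + (γ+w)^(n+1))/2) + (2/3) * (γ+w/2)^(n+1)
      - ((γ+w)^(n+1+1) - γ^(n+1+1)) / ((((n+1:ℕ):ℝ)+1) * (γ+w-γ)) =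
      (w/6 * γ^(n+1) + w/6 * (γ+w)^(n+1) + 2*w/3 * (γ+w/2)^(n+1)
        - ((γ+w)^(n+2)/((n:ℝ)+2) - γ^(n+2)/((n:ℝ)+2))) / w := by
    have : (((n+1:ℕ):ℝ)+1) = n + 2 := by push_cast; ring
    rw [this, add_sub_cancel_left]
    generalize (γ+w)^(n+1) = a1
    generalize (γ+w/2)^(n+1) = a2
    generalize γ^(n+1) = a3
    generalize (γ+w)^(n+1+1) = a4
    generalize γ^(n+1+1) = a5
    field_simp
    ring
  rw [hE, abs_le, le_div_iff₀ hw, div_le_iff₀ hw]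
  push_cast
  generalize (γ+w)^(n+1) = a1 at *
  generalize (γ+w/2)^(n+1) = a2 at *
  generalize γ^(n+1) = a3 at *
  generalize (γ+w)^(n+2)/((n:ℝ)+2) = a4 at *
  generalize γ^(n+2)/((n:ℝ)+2) = a5 at *
  generalize (γ+w/2)^(n+2)/((n:ℝ)+2) = a6 at *
  generalize (γ+w/6)^(n+2)/((n:ℝ)+2) = a7 at *
  generalize (γ+5*w/6)^(n+2)/((n:ℝ)+2) = a8 at *
  have hA : 0 < γ^n := by positivity
  have hBp : 0 < γ^n + σ * w := by rw [← hB]; positivity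
  generalize γ^n = A at *
  have q1 : 0 ≤ ((n:ℝ)+1) * w^2 * A := by positivity
  have q2 : 0 ≤ ((n:ℝ)+1) * w^2 * (A + σ * w) := by positivity
  obtain ⟨p1, p1'⟩ := p1
  obtain ⟨p2, p2'⟩ := p2
  obtain ⟨p3, p3'⟩ := p3
  obtain ⟨p4, p4'⟩ := p4
  constructor
  · nlinarith only [p1, p1', p2, p2', p3, p3', p4, p4', q1, q2]
  · nlinarith only [p1, p1', p2, p2', p3, p3', p4, p4', q1, q2]
end

section
/- Let 0 < γ < δ, s ∈ ℕ with s ≥ 1, and p, q > 1 with 1/p + 1/q = 1. Then |(1/3)·A(γ^s, δ^s) + (2/3)·A(γ,δ)^s − L_s(γ,δ)^s| ≤ ((δ−γ)/2)·((2^(p+1)+1)/(3(p+1)))^(1/p)·(1/4)^(1/q)·[ ((s·γ^(s−1))^q + 3(s·δ^(s−1))^q)^(1/q) + (3(s·γ^(s−1))^q + (s·δ^(s−1))^q)^(1/q) ]. -/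
open Real

lemma aux_pm (a b : ℝ) (ha : 0 < a) (hab : a < b) (s : ℕ) :
    ((a+b)/2)^s ≤ (a^s + b^s)/2 ∧ (a+b)/2 * ((a^s + b^s)/2) ≤ (a^(s+1) + b^(s+1))/2 := by
  have key : ∀ s : ℕ, (a+b)/2 * ((a^s + b^s)/2) ≤ (a^(s+1) + b^(s+1))/2 := by
    intro s
    have h1 : a^s ≤ b^s := pow_le_pow_left₀ ha.le hab.le s
    have h2 := mul_nonneg (sub_nonneg.2 hab.le) (sub_nonneg.2 h1)
    rw [pow_succ, pow_succ]
    nlinarith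
  refine ⟨?_, key s⟩
  induction s with
  | zero => norm_num
  | succ n ih =>
    refine le_trans ?_ (key n)
    rw [pow_succ, mul_comm]
    exact mul_le_mul_of_nonneg_left ih (by linarith)

lemma aux_hh (a b : ℝ) (ha : 0 < a) (hab : a < b) (s : ℕ) :
    ((s:ℝ)+1) * (b-a) * ((a+b)/2)^s ≤ b^(s+1) - a^(s+1) ∧
    b^(s+1) - a^(s+1) ≤ ((s:ℝ)+1) * (b-a) * ((a^s+b^s)/2) := by
  induction s with
  | zero => norm_num
  | succ n ih =>
    have e : b^(n+1+1) - a^(n+1+1) = (a+b)/2 * (b^(n+1) - a^(n+1))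
        + (b-a) * ((a^(n+1) + b^(n+1))/2) := by ring
    have hm : 0 ≤ (a+b)/2 := by linarith
    have hd : 0 ≤ b - a := by linarith
    have hn : (0:ℝ) ≤ ((n:ℝ)+1) * (b-a) := by positivity
    have h1 := mul_le_mul_of_nonneg_left ih.1 hm
    have h2 := mul_le_mul_of_nonneg_left ih.2 hm
    have h3 := mul_le_mul_of_nonneg_left (aux_pm a b ha hab (n+1)).1 hd
    have h4 := mul_le_mul_of_nonneg_left (aux_pm a b ha hab n).2 hn
    rw [e]
    push_cast
    constructor
    · have : ((n:ℝ)+1+1) * (b-a) * ((a+b)/2)^(n+1) =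
        (a+b)/2 * (((n:ℝ)+1) * (b-a) * ((a+b)/2)^n) + (b-a) * ((a+b)/2)^(n+1) := by ring
      linarith
    · linarith

lemma aux_tan (m b : ℝ) (hm : 0 < m) (hmb : m ≤ b) (n : ℕ) :
    b^(n+1) - m^(n+1) ≤ ((n:ℝ)+1) * b^n * (b-m) := by
  induction n with
  | zero => norm_num
  | succ n ih =>
    have h1 : m^(n+1) ≤ b^(n+1) := pow_le_pow_left₀ hm.le hmb _
    have h2 := mul_le_mul_of_nonneg_left ih (hm.le.trans hmb)
    have h3 := mul_le_mul_of_nonneg_right h1 (sub_nonneg.2 hmb)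
    have e : b^(n+1+1) - m^(n+1+1) = b * (b^(n+1) - m^(n+1)) + m^(n+1) * (b-m) := by ring
    have e2 : ((n:ℝ)+1+1) * b^(n+1) * (b-m) =
      b * (((n:ℝ)+1) * b^n * (b-m)) + b^(n+1) * (b-m) := by ring
    push_cast
    linarith

lemma aux_root (c r : ℝ) (x : ℝ) (hc : 0 ≤ c) (hc1 : c ≤ 1) (hx : c ≤ x) (hr : 1 < r) :
    c ≤ x ^ (1/r) := by
  have h1 : 1/r ≤ 1 := by rw [div_le_one (by linarith)]; linarith
  have h0 : 0 < 1/r := by positivity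
  refine le_trans ?_ (Real.rpow_le_rpow hc hx h0.le)
  rcases hc.eq_or_lt with h | h
  · rw [← h]; exact Real.rpow_nonneg le_rfl _
  · simpa using Real.rpow_le_rpow_of_exponent_ge h hc1 h1

theorem means_simpson_pow_holder (γ δ p q : ℝ) (s : ℕ)
    (hγ : 0 < γ) (hγδ : γ < δ) (hs : 1 ≤ s)
    (hp : 1 < p) (hq : 1 < q) (hpq : 1/p + 1/q = 1) :
    |(1/3) * ((γ^s + δ^s)/2) + (2/3) * ((γ+δ)/2)^s
      - (δ^(s+1) - γ^(s+1)) / (((s:ℝ)+1) * (δ-γ))|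
    ≤ ((δ-γ)/2) * (((2:ℝ)^(p+1) + 1) / (3*(p+1))) ^ (1/p) * ((1/4 : ℝ)) ^ (1/q) *
        ((((s:ℝ) * γ^(s-1)) ^ q + 3 * ((s:ℝ) * δ^(s-1)) ^ q) ^ (1/q)
          + (3 * ((s:ℝ) * γ^(s-1)) ^ q + ((s:ℝ) * δ^(s-1)) ^ q) ^ (1/q)) := by
  have hδ : 0 < δ := hγ.trans hγδ
  have hd : 0 < δ - γ := sub_pos.2 hγδ
  set A := (s:ℝ) * γ^(s-1) with hA
  set B := (s:ℝ) * δ^(s-1) with hB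
  have hA0 : 0 ≤ A := by positivity
  have hB0 : 0 ≤ B := by positivity
  have hK : (2/3:ℝ) ≤ (((2:ℝ)^(p+1) + 1) / (3*(p+1))) ^ (1/p) := by
    apply aux_root _ _ _ (by norm_num) (by norm_num) _ hp
    rw [le_div_iff₀ (by linarith), Real.rpow_add (by norm_num), Real.rpow_one]
    have := one_add_mul_self_le_rpow_one_add (s := 1) (by norm_num) hp.le
    norm_num at this
    linarith
  have hQ : (1/4:ℝ) ≤ (1/4:ℝ)^(1/q) := aux_root _ _ _ (by norm_num) (by norm_num) le_rfl hq
  have hAq : 0 ≤ A^q := Real.rpow_nonneg hA0 _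
  have hBq : 0 ≤ B^q := Real.rpow_nonneg hB0 _
  have hr : ∀ x, B^q ≤ x → B ≤ x^(1/q) := by
    intro x hx
    have := Real.rpow_le_rpow hBq hx (by positivity : 0 ≤ 1/q)
    rwa [← Real.rpow_mul hB0, mul_one_div_cancel (by linarith), Real.rpow_one] at this
  have h1 := hr (A^q + 3*B^q) (by linarith)
  have h2 := hr (3*A^q + B^q) (by linarith)
  have hR : (δ-γ)/2 * (2/3) * (1/4) * (B + B) ≤ ((δ-γ)/2) * (((2:ℝ)^(p+1) + 1) / (3*(p+1))) ^ (1/p) * ((1/4 : ℝ)) ^ (1/q) *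
        ((A ^ q + 3 * B ^ q) ^ (1/q) + (3 * A ^ q + B ^ q) ^ (1/q)) := by
    gcongr
  refine le_trans ?_ hR
  obtain ⟨l, u⟩ := aux_hh γ δ hγ hγδ s
  have hP : 0 < ((s:ℝ)+1) * (δ-γ) := by positivity
  rw [mul_comm, ← le_div_iff₀ hP] at l
  rw [mul_comm, ← div_le_iff₀ hP] at u
  have hT : δ^s - ((γ+δ)/2)^s ≤ B * (δ - (γ+δ)/2) := by
    have := aux_tan ((γ+δ)/2) δ (by linarith) (by linarith) (s-1)
    rw [Nat.sub_add_cancel hs] at this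
    rw [Nat.cast_sub hs] at this
    simpa [hB] using this
  have hM : γ^s ≤ ((γ+δ)/2)^s := pow_le_pow_left₀ hγ.le (by linarith) s
  rw [abs_le]
  constructor <;> nlinarith
end

section
/- Let 0 < γ < δ, s ∈ ℕ with s ≥ 1, and q ≥ 1. Then |(1/3)·A(γ^s, δ^s) + (2/3)·A(γ,δ)^s − L_s(γ,δ)^s| ≤ ((δ−γ)/2)·(5/36)^(1−1/q)·(1/648)^(1/q)·[ (61(s·γ^(s−1))^q + 29(s·δ^(s−1))^q)^(1/q) + (29(s·γ^(s−1))^q + 61(s·δ^(s−1))^q)^(1/q) ]. -/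
open Real

lemma aux_mid (a b : ℝ) (ha : 0 < a) (hab : a ≤ b) (n : ℕ) :
    ((n:ℝ)+1) * (b-a) * ((a+b)/2)^n ≤ b^(n+1) - a^(n+1) := by
  induction n with
  | zero => simp
  | succ n ih =>
    have h1 : ((a+b)/2)^(n+1) ≤ (a^(n+1)+b^(n+1))/2 := by
      have := (convexOn_pow (𝕜 := ℝ) (n+1)).2 (show a ∈ Set.Ici (0:ℝ) from ha.le)
        (show b ∈ Set.Ici (0:ℝ) from ha.le.trans hab)
        (show (0:ℝ) ≤ 1/2 by norm_num) (show (0:ℝ) ≤ 1/2 by norm_num) (by norm_num)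
      simp only [smul_eq_mul] at this
      calc ((a+b)/2)^(n+1) = (1/2*a+1/2*b)^(n+1) := by congr 1; ring
        _ ≤ _ := this
        _ = _ := by ring
    have h2 := mul_le_mul_of_nonneg_left ih (show 0 ≤ (a+b)/2 by linarith)
    have h3 := mul_le_mul_of_nonneg_left h1 (show 0 ≤ b-a by linarith)
    push_cast
    have e : b^(n+1+1) - a^(n+1+1)
      = (a+b)/2*(b^(n+1)-a^(n+1)) + (b-a)*((a^(n+1)+b^(n+1))/2) := by ring
    rw [e]
    refine le_trans (le_of_eq ?_) (add_le_add h2 h3)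
    ring

lemma aux_trap (a b : ℝ) (ha : 0 < a) (hab : a ≤ b) (n : ℕ) :
    b^(n+1) - a^(n+1) ≤ ((n:ℝ)+1) * (b-a) * ((a^n+b^n)/2) := by
  induction n with
  | zero => simp
  | succ n ih =>
    have h1 : (a+b)/2*((a^n+b^n)/2) ≤ (a^(n+1)+b^(n+1))/2 := by
      have := mul_nonneg (sub_nonneg.2 hab) (sub_nonneg.2 (pow_le_pow_left₀ ha.le hab n))
      have e : (b-a)*(b^n-a^n) = 4*((a^(n+1)+b^(n+1))/2 - (a+b)/2*((a^n+b^n)/2)) := by ring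
      linarith
    have h2 := mul_le_mul_of_nonneg_left ih (show 0 ≤ (a+b)/2 by linarith)
    have h3 := mul_le_mul_of_nonneg_left h1
      (show 0 ≤ ((n:ℝ)+1)*(b-a) from mul_nonneg (by positivity) (by linarith))
    push_cast
    have e : b^(n+1+1) - a^(n+1+1)
      = (a+b)/2*(b^(n+1)-a^(n+1)) + (b-a)*((a^(n+1)+b^(n+1))/2) := by ring
    rw [e]
    linarith

lemma aux_q1 (a b : ℝ) (n : ℕ) (ha : 0 < a) (hab : a < b) :
    |(1/3) * ((a^(n+1) + b^(n+1))/2) + (2/3) * ((a+b)/2)^(n+1)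
      - (b^(n+1+1) - a^(n+1+1)) / ((((n:ℝ)+1)+1) * (b-a))|
    ≤ (b-a)/2 * (5/36) * (((n:ℝ)+1)*a^n + ((n:ℝ)+1)*b^n) := by
  obtain ⟨m, hm⟩ : ∃ m, m = (a+b)/2 := ⟨_, rfl⟩
  have ham : a ≤ m := by linarith
  have hmb : m ≤ b := by linarith
  have hm0 : 0 < m := by linarith
  have hb : 0 < b := by linarith
  have hba : 0 < b - a := by linarith
  have e1 : m - a = (b-a)/2 := by linarith
  have e2 : b - m = (b-a)/2 := by linarith
  have hn : (0:ℝ) ≤ (n:ℝ)+1 := by positivity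
  have hD : 0 < (((n:ℝ)+1)+1) * (b-a) := by positivity
  have c1 := aux_mid a b ha hab.le (n+1)
  have t1 := aux_trap a m ha ham (n+1)
  have t2 := aux_trap m b hm0 hmb (n+1)
  have c3 := aux_mid a m ha ham n
  have t3 := aux_trap m b hm0 hmb n
  have hc3 : a^n ≤ ((a+m)/2)^n := pow_le_pow_left₀ ha.le (by linarith) n
  have hcv : m^n ≤ (a^n+b^n)/2 := by
    have := (convexOn_pow (𝕜 := ℝ) n).2 (show a ∈ Set.Ici (0:ℝ) from ha.le)
        (show b ∈ Set.Ici (0:ℝ) from ha.le.trans hab.le)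
        (show (0:ℝ) ≤ 1/2 by norm_num) (show (0:ℝ) ≤ 1/2 by norm_num) (by norm_num)
    simp only [smul_eq_mul] at this
    calc m^n = (1/2*a+1/2*b)^n := by rw [hm]; congr 1; ring
        _ ≤ _ := this
        _ = _ := by ring
  rw [← hm] at c1 ⊢
  rw [e1] at t1 c3
  rw [e2] at t2 t3
  push_cast at c1 t1 t2
  have L : m^(n+1) ≤ (b^(n+1+1) - a^(n+1+1)) / ((((n:ℝ)+1)+1) * (b-a)) := by
    rw [le_div_iff₀ hD]; linarith
  have U : (b^(n+1+1) - a^(n+1+1)) / ((((n:ℝ)+1)+1) * (b-a))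
      ≤ (a^(n+1) + 2*m^(n+1) + b^(n+1))/4 := by
    rw [div_le_iff₀ hD]; linarith
  have hk : 0 ≤ ((n:ℝ)+1)*((b-a)/2) := by positivity
  have k1 := mul_le_mul_of_nonneg_left hc3 hk
  have k2 := mul_le_mul_of_nonneg_left hcv hk
  have pa : 0 ≤ ((n:ℝ)+1)*((b-a)/2)*a^n := by positivity
  have pb : 0 ≤ ((n:ℝ)+1)*((b-a)/2)*b^n := by positivity
  have er : (b-a)/2 * (5/36) * (((n:ℝ)+1)*a^n + ((n:ℝ)+1)*b^n)
    = 5/36 * (((n:ℝ)+1)*((b-a)/2)*a^n + ((n:ℝ)+1)*((b-a)/2)*b^n) := by ring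
  rw [er, abs_le]
  constructor <;> linarith

lemma aux_pm_s18 (u v A B q : ℝ) (hu : 0 ≤ u) (hv : 0 ≤ v) (huv : u + v = 90)
    (hA : 0 ≤ A) (hB : 0 ≤ B) (hq : 1 ≤ q) :
    (u*A+v*B)/648 ≤ (5/36 : ℝ) ^ (1 - 1/q) * (1/648 : ℝ) ^ (1/q) * (u*A^q+v*B^q)^(1/q) := by
  have hq0 : 0 < q := by linarith
  have h := (convexOn_rpow hq).2 (show A ∈ Set.Ici (0:ℝ) from hA) (show B ∈ Set.Ici (0:ℝ) from hB)
    (show 0 ≤ u/90 by positivity) (show 0 ≤ v/90 by positivity) (by linarith)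
  simp only [smul_eq_mul] at h
  have hX : 0 ≤ u/90*A + v/90*B := by positivity
  have hY : 0 ≤ u*A^q+v*B^q := by positivity
  have h2 := Real.rpow_le_rpow (by positivity) h (show 0 ≤ 1/q by positivity)
  rw [← Real.rpow_mul hX, mul_one_div_cancel hq0.ne', Real.rpow_one] at h2
  have e : u/90*A^q + v/90*B^q = (36/5) * ((1/648) * (u*A^q+v*B^q)) := by ring
  rw [e, Real.mul_rpow (by norm_num) (by positivity), Real.mul_rpow (by norm_num) hY] at h2
  have e2 : (5/36:ℝ)^(1-1/q) = 5/36 * (36/5:ℝ)^(1/q) := by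
    rw [Real.rpow_sub (by norm_num), Real.rpow_one, show (36/5:ℝ) = (5/36)⁻¹ by norm_num,
      Real.inv_rpow (by norm_num), div_eq_mul_inv]
  rw [e2]
  linarith

theorem means_simpson_pow_power_mean (γ δ q : ℝ) (s : ℕ)
    (hγ : 0 < γ) (hγδ : γ < δ) (hs : 1 ≤ s) (hq : 1 ≤ q) :
    |(1/3) * ((γ^s + δ^s)/2) + (2/3) * ((γ+δ)/2)^s
      - (δ^(s+1) - γ^(s+1)) / (((s:ℝ)+1) * (δ-γ))|
    ≤ ((δ-γ)/2) * ((5/36 : ℝ)) ^ (1 - 1/q) * ((1/648 : ℝ)) ^ (1/q) *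
        ((61 * ((s:ℝ) * γ^(s-1)) ^ q + 29 * ((s:ℝ) * δ^(s-1)) ^ q) ^ (1/q)
          + (29 * ((s:ℝ) * γ^(s-1)) ^ q + 61 * ((s:ℝ) * δ^(s-1)) ^ q) ^ (1/q)) := by
  obtain ⟨n, rfl⟩ : ∃ n, s = n + 1 := ⟨s - 1, by omega⟩
  have hδ : 0 < δ := hγ.trans hγδ
  have h := aux_q1 γ δ n hγ hγδ
  simp only [Nat.add_sub_cancel]
  push_cast
  have hA : 0 ≤ ((n:ℝ)+1)*γ^n := by positivity
  have hB : 0 ≤ ((n:ℝ)+1)*δ^n := by positivity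
  have p1 := aux_pm_s18 61 29 _ _ q (by norm_num) (by norm_num) (by norm_num) hA hB hq
  have p2 := aux_pm_s18 29 61 _ _ q (by norm_num) (by norm_num) (by norm_num) hA hB hq
  have p3 := mul_le_mul_of_nonneg_left (add_le_add p1 p2) (show 0 ≤ (δ-γ)/2 by linarith)
  refine h.trans (le_trans (le_of_eq ?_) (p3.trans (le_of_eq ?_)))
  · ring
  · ring
end

section
/- Let 0 < α < β. Then |(1/3)·A(α,β) + (2/3)·G(α,β) − L(α,β)| ≤ (ln β − ln α)·(5/36)·A(α,β). -/
theorem aux_nonneg (f f' : ℝ → ℝ) (h0 : f 0 = 0) (hd : ∀ x, HasDerivAt f (f' x) x)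
    (hn : ∀ x, 0 ≤ x → 0 ≤ f' x) (t : ℝ) (ht : 0 ≤ t) : 0 ≤ f t := by
  have hm : MonotoneOn f (Set.Ici 0) := by
    apply monotoneOn_of_deriv_nonneg (convex_Ici 0)
    · exact fun x _ => (hd x).continuousAt.continuousWithinAt
    · exact fun x _ => (hd x).differentiableAt.differentiableWithinAt
    · intro x hx
      rw [interior_Ici] at hx
      rw [(hd x).deriv]
      exact hn x (le_of_lt hx)
  have := hm (Set.mem_Ici.2 le_rfl) (Set.mem_Ici.2 ht) ht
  rwa [h0] at this

theorem aux1 (t : ℝ) (ht : 0 ≤ t) : 0 ≤ t * Real.cosh t - Real.sinh t := by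
  refine aux_nonneg (fun t => t * Real.cosh t - Real.sinh t) (fun t => t * Real.sinh t)
    (by simp) ?_ ?_ t ht
  · intro x
    exact (((hasDerivAt_id x).mul (Real.hasDerivAt_cosh x)).sub
      (Real.hasDerivAt_sinh x)).congr_deriv (by simp)
  · exact fun x hx => mul_nonneg hx (Real.sinh_nonneg_iff.2 hx)

theorem aux2 (t : ℝ) (ht : 0 ≤ t) : 0 ≤ t * Real.sinh t + 2 - 2 * Real.cosh t := by
  refine aux_nonneg (fun t => t * Real.sinh t + 2 - 2 * Real.cosh t)
    (fun t => t * Real.cosh t - Real.sinh t) (by simp) ?_ aux1 t ht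
  intro x
  exact ((((hasDerivAt_id x).mul (Real.hasDerivAt_sinh x)).add_const 2).sub
      ((Real.hasDerivAt_cosh x).const_mul 2)).congr_deriv (by simp; ring)

theorem aux3 (t : ℝ) (ht : 0 ≤ t) : 0 ≤ t * Real.cosh t + 2 * t - 3 * Real.sinh t := by
  refine aux_nonneg (fun t => t * Real.cosh t + 2 * t - 3 * Real.sinh t)
    (fun t => t * Real.sinh t + 2 - 2 * Real.cosh t) (by simp) ?_ aux2 t ht
  intro x
  exact ((((hasDerivAt_id x).mul (Real.hasDerivAt_cosh x)).add
    ((hasDerivAt_id x).const_mul 2)).sub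
      ((Real.hasDerivAt_sinh x).const_mul 3)).congr_deriv (by simp; ring)

theorem means_arith_geom_log (α β : ℝ) (hα : 0 < α) (hαβ : α < β) :
    |(1/3) * ((α+β)/2) + (2/3) * Real.sqrt (α*β) - (β-α)/(Real.log β - Real.log α)|
    ≤ (Real.log β - Real.log α) * (5/36) * ((α+β)/2) := by
  have hβ : 0 < β := hα.trans hαβ
  have hl := Real.log_lt_log hα hαβ
  obtain ⟨t, htd⟩ : ∃ t, t = (Real.log β - Real.log α) / 2 := ⟨_, rfl⟩
  obtain ⟨g, hgd⟩ : ∃ g, g = Real.exp ((Real.log β + Real.log α) / 2) := ⟨_, rfl⟩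
  have hg : 0 < g := hgd ▸ Real.exp_pos _
  have ht : 0 < t := by linarith
  have hb : β = g * Real.exp t := by
    rw [hgd, htd, ← Real.exp_add]
    ring_nf
    rw [Real.exp_log hβ]
  have ha : α = g * Real.exp (-t) := by
    rw [hgd, htd, ← Real.exp_add]
    ring_nf
    rw [Real.exp_log hα]
  have hA : (α + β) / 2 = g * Real.cosh t := by
    rw [Real.cosh_eq, ha, hb]; ring
  have hD : β - α = g * (2 * Real.sinh t) := by
    rw [Real.sinh_eq, ha, hb]; ring
  have hG : Real.sqrt (α * β) = g := by
    have : α * β = g ^ 2 := by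
      rw [ha, hb, Real.exp_neg]
      field_simp
    rw [this, Real.sqrt_sq hg.le]
  have hL : Real.log β - Real.log α = 2 * t := by linarith
  rw [hA, hG, hD, hL]
  have e1 : (1/3) * (g * Real.cosh t) + (2/3) * g - g * (2 * Real.sinh t) / (2 * t)
      = g * (t * Real.cosh t + 2 * t - 3 * Real.sinh t) / (3 * t) := by
    field_simp
  have h3 := aux3 t ht.le
  have h2 := aux2 t ht.le
  have hs : t ≤ Real.sinh t := Real.self_le_sinh_iff.2 ht.le
  have hc := Real.sinh_lt_cosh t
  have hc0 := Real.cosh_pos t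
  rw [e1, abs_of_nonneg (by positivity), div_le_iff₀ (by positivity)]
  have e2 : 2 * t * (5/36) * (g * Real.cosh t) * (3 * t)
      = g * (5/6 * t * (t * Real.cosh t)) := by ring
  rw [e2]
  apply mul_le_mul_of_nonneg_left _ hg.le
  have k1 : t * Real.sinh t ≤ t * Real.cosh t := mul_le_mul_of_nonneg_left hc.le ht.le
  have k0 : 0 ≤ t * Real.cosh t := by positivity
  have k2 : Real.cosh t - 1 ≤ 5/6 * (t * Real.cosh t) := by linarith
  have k3 := mul_le_mul_of_nonneg_left k2 ht.le
  nlinarith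
end
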